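/- arXiv:1608.07855 — 3 statements merged into one kernel-verified Lean document; each statement's English description precedes it below -/
import Mathlib

section
/- Let G be a connected finite simple graph and let a₁, a₂, a₃, a₄ be four distinct vertices of G, and set A = {a₁, a₂, a₃, a₄}. Assume that whenever {i, j, k, ℓ} = {1, 2, 3, 4}, every path in G from a_i to a_j and every path in G from a_k to a_ℓ share at least one common vertex lying outside A. Then there exists a vertex v of G such that deleting v disconnects G and the four vertices a₁, a₂, a₃, a₄ lie in four pairwise distinct connected components of G − v. -/
open SimpleGraph

variable {V : Type*}

/-- The `λ`-value of a walk: the sum in `ℤ/2`, over the edges of the walk counted with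
multiplicity, of their labels. -/
def walkLambda (lam : Sym2 V → ZMod 2) {G : SimpleGraph V} {x y : V} (w : G.Walk x y) :
    ZMod 2 :=
  (w.edges.map lam).sum

/-- `b` can be reached from `a` by a walk in `G` all of whose vertices avoid `Zv`. -/
def ReachAvoiding (G : SimpleGraph V) (Zv : Set V) (a b : V) : Prop :=
  ∃ w : G.Walk a b, ∀ x ∈ w.support, x ∉ Zv

/-- `B` is a bridge of `G` with respect to a cycle with vertex set `Zv` and edge set `Ze`:
either a single edge not of the cycle together with its two endpoints, both on the cycle,
or a connected component of `G − Zv` together with all edges (and their endpoints on the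
cycle) joining it to `Zv`. -/
def IsBridgeOf (G : SimpleGraph V) (Zv : Set V) (Ze : Set (Sym2 V)) (B : G.Subgraph) :
    Prop :=
  (∃ u v, G.Adj u v ∧ s(u, v) ∉ Ze ∧ u ∈ Zv ∧ v ∈ Zv ∧
      B.verts = {u, v} ∧ ∀ a b, B.Adj a b ↔ s(a, b) = s(u, v)) ∨
  (∃ a, a ∉ Zv ∧
      B.verts = {b | ReachAvoiding G Zv a b} ∪
        {z | z ∈ Zv ∧ ∃ c, ReachAvoiding G Zv a c ∧ G.Adj c z} ∧
      ∀ x y, B.Adj x y ↔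
        G.Adj x y ∧ (ReachAvoiding G Zv a x ∨ ReachAvoiding G Zv a y))

/-- `w` is a proper walk lying in the subgraph `B`, with respect to a cycle with vertex
set `Zv` and edge set `Ze`: the walk lies in `B`, none of its vertices lies on the cycle
except possibly its endpoints, and none of its edges is an edge of the cycle. -/
def IsProperWalkIn {G : SimpleGraph V} (B : G.Subgraph) (Zv : Set V) (Ze : Set (Sym2 V))
    {x y : V} (w : G.Walk x y) : Prop :=
  (∀ u ∈ w.support, u ∈ B.verts) ∧ (∀ e ∈ w.edges, e ∈ B.edgeSet) ∧
    (∀ u ∈ w.support, u ∈ Zv → u = x ∨ u = y) ∧ (∀ e ∈ w.edges, e ∉ Ze)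

/-- The set of `λ`-values of proper walks in `B` from `x` to the reference vertex `w`. -/
def labelSet {G : SimpleGraph V} (B : G.Subgraph) (Zv : Set V) (Ze : Set (Sym2 V))
    (lam : Sym2 V → ZMod 2) (x w : V) : Set (ZMod 2) :=
  {t | ∃ ω : G.Walk x w, IsProperWalkIn B Zv Ze ω ∧ walkLambda lam ω = t}

/-- A graph is 2-connected: it has at least three vertices, it is connected, and it
remains connected after the deletion of any single vertex. -/
def TwoConnected (G : SimpleGraph V) : Prop :=
  3 ≤ Nat.card V ∧ G.Connected ∧ ∀ v : V, (G.induce {u | u ≠ v}).Connected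

/-!
Three of the terminals `a i` are the feet of a tripod: paths from a centre `x` that pairwise meet
only in `x`. A walk from a further terminal that avoids `x` cannot reach the tripod, since from
its first vertex on the tripod it could follow a leg to its foot and so miss the path formed by the
other two legs. Hence further legs with the same centre can be added for any finite set of other
terminals. In such a spider, applying the same observation to one terminal and the legs of the
others shows that `x` separates any two terminals.
-/

section Cardinality

variable {ι : Type*}

lemma nontrivial_sdiff_of_encard_add_two_le {S T : Set ι} (hS : S.Finite)
    (hST : S.encard + 2 ≤ T.encard) : (T \ S).Nontrivial := by
  rw [← Set.one_lt_encard_iff_nontrivial]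
  calc (1 : ℕ∞) < 2 := by norm_num
    _ ≤ T.encard - S.encard := ENat.le_sub_of_add_le_left hS.encard_lt_top.ne hST
    _ ≤ (T \ S).encard := Set.tsub_encard_le_encard_sdiff T S

lemma exists_nodup_of_four_le_card (hι : 4 ≤ ENat.card ι) {i j : ι} (hij : i ≠ j) :
    ∃ k l, [i, j, k, l].Nodup := by
  obtain ⟨k, ⟨-, hk⟩, l, ⟨-, hl⟩, hkl⟩ : (Set.univ \ {i, j}).Nontrivial :=
    nontrivial_sdiff_of_encard_add_two_le (Set.toFinite _)
      (by rwa [Set.encard_pair hij, Set.encard_univ, two_add_two_eq_four])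
  exact ⟨k, l, by grind⟩

end Cardinality

section Walks

variable {G : SimpleGraph V} {u v x y : V}

lemma exists_isPath_forall_mem_imp_eq_end (S : Set V) (p : G.Walk u v) (hv : v ∈ S) :
    ∃ z ∈ S, ∃ q : G.Walk u z, q.IsPath ∧ q.support ⊆ p.support ∧
      ∀ t ∈ q.support, t ∈ S → t = z := by
  classical
  obtain ⟨z, hzS, hzp, hfirst⟩ := p.exists_mem_support_forall_mem_support_imp_eq
    {t ∈ p.support.toFinset | t ∈ S} ⟨v, by simp [hv]⟩
  have hsub := (p.takeUntil z hzp).support_bypass_subset_support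
  have hsub' := p.support_takeUntil_subset_support hzp
  refine ⟨z, (Finset.mem_filter.mp hzS).2, (p.takeUntil z hzp).bypass, Walk.bypass_isPath _,
    fun t ht => hsub' (hsub ht), fun t ht htS => hfirst t ?_ (hsub ht)⟩
  simp [htS, hsub' (hsub ht)]

lemma exists_walk_start_notMem_support {p : G.Walk x v} (hp : p.IsPath) (hy : y ∈ p.support)
    (hyx : y ≠ x) : ∃ q : G.Walk y v, q.support ⊆ p.support ∧ x ∉ q.support := by
  obtain ⟨r, q, rfl⟩ := p.mem_support_iff_exists_append.mp hy
  exact ⟨q, Walk.support_subset_support_append_right r q,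
    fun hx => hp.ne_of_mem_support_of_append hyx.symm r.start_mem_support hx rfl⟩

lemma not_reachable_induce_ne_of_forall_mem_support (h : ∀ p : G.Walk u v, x ∈ p.support)
    (hu : u ∈ {t | t ≠ x}) (hv : v ∈ {t | t ≠ x}) :
    ¬ (G.induce {t | t ≠ x}).Reachable ⟨u, hu⟩ ⟨v, hv⟩ := by
  rintro ⟨p⟩
  have hx := h (p.map (Embedding.induce {t | t ≠ x}).toHom)
  obtain ⟨z, -, hz⟩ := List.mem_map.mp (Walk.support_map _ p ▸ hx)
  exact z.2 hz

/-- Two walks from a common vertex `x` meet only at `x`: the condition on the legs of a spider. -/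
def MeetOnlyAtStart (p : G.Walk x u) (q : G.Walk x v) : Prop :=
  ∀ ⦃t⦄, t ∈ p.support → t ∈ q.support → t = x

lemma MeetOnlyAtStart.symm {p : G.Walk x u} {q : G.Walk x v} (h : MeetOnlyAtStart p q) :
    MeetOnlyAtStart q p :=
  fun _ hq hp => h hp hq

lemma exists_tripod (hconn : G.Connected) (u v w : V) :
    ∃ (x : V) (p : G.Walk x u) (q : G.Walk x v) (r : G.Walk x w),
      p.IsPath ∧ q.IsPath ∧ r.IsPath ∧
        MeetOnlyAtStart p q ∧ MeetOnlyAtStart p r ∧ MeetOnlyAtStart q r := by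
  obtain ⟨P, hP⟩ := hconn.exists_isPath u v
  obtain ⟨R⟩ := hconn.preconnected w v
  obtain ⟨x, hx, r, hr, -, hrP⟩ :=
    exists_isPath_forall_mem_imp_eq_end {t | t ∈ P.support} R P.end_mem_support
  obtain ⟨p, q, hp, hq, rfl⟩ := hP.mem_support_iff_exists_append.mp hx
  simp only [Set.mem_ofPred_eq, Walk.mem_support_append_iff] at hrP
  refine ⟨x, p.reverse, q, r.reverse, hp.reverse, hq, hr.reverse, ?_, ?_, ?_⟩ <;>
    intro t ht ht' <;>
    simp only [Walk.support_reverse, List.mem_reverse] at ht ht'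
  · by_contra htx
    exact hP.ne_of_mem_support_of_append htx ht ht' rfl
  · exact hrP t ht' (.inl ht)
  · exact hrP t ht' (.inr ht)

end Walks

section Spiders

variable {ι : Type*} {G : SimpleGraph V} {a : ι → V} {x y : V} {w : ∀ i, G.Walk x (a i)}
  {S T : Set ι} {i j k l : ι}

/-- The crossing condition for a family `a` of terminals: a path joining two of them and a path
joining two others always share a vertex that is not a terminal. -/
def PathsCrossOffTerminals (G : SimpleGraph V) (a : ι → V) : Prop :=
  ∀ i j k l : ι, [i, j, k, l].Nodup →
    ∀ p : G.Walk (a i) (a j), p.IsPath → ∀ q : G.Walk (a k) (a l), q.IsPath →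
      ∃ t, t ∈ p.support ∧ t ∈ q.support ∧ t ∉ Set.range a

lemma PathsCrossOffTerminals.exists_mem_support (hcross : PathsCrossOffTerminals G a)
    (hnodup : [i, j, k, l].Nodup) (p : G.Walk (a i) (a j)) (q : G.Walk (a k) (a l)) :
    ∃ t, t ∈ p.support ∧ t ∈ q.support ∧ t ∉ Set.range a := by
  classical
  obtain ⟨t, htp, htq, hta⟩ :=
    hcross i j k l hnodup p.bypass p.bypass_isPath q.bypass q.bypass_isPath
  exact ⟨t, p.support_bypass_subset_support htp, q.support_bypass_subset_support htq, hta⟩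

/-- The walks `w i` with `i ∈ T` form a spider with centre `x`: they are paths that pairwise meet
only at `x`. The family `w` is indexed by all of `ι` to avoid walks depending on proofs of
`i ∈ T`; its members outside `T` are arbitrary. -/
structure IsSpider (w : ∀ i, G.Walk x (a i)) (T : Set ι) : Prop where
  isPath : ∀ i ∈ T, (w i).IsPath
  meetOnlyAtStart : T.Pairwise fun i j => MeetOnlyAtStart (w i) (w j)

namespace IsSpider

lemma mono (hw : IsSpider w T) (hST : S ⊆ T) : IsSpider w S :=
  ⟨fun i hi => hw.isPath i (hST hi), hw.meetOnlyAtStart.mono hST⟩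

lemma update_insert [DecidableEq ι] (hw : IsSpider w T) (hl : l ∉ T) {q : G.Walk x (a l)}
    (hq : q.IsPath) (hmeet : ∀ i ∈ T, MeetOnlyAtStart (w i) q) :
    IsSpider (Function.update w l q) (insert l T) := by
  have hold : ∀ i ∈ T, Function.update w l q i = w i :=
    fun i hi => Function.update_of_ne (ne_of_mem_of_not_mem hi hl) q w
  constructor
  · rintro i (rfl | hi)
    · rwa [Function.update_self]
    · rw [hold i hi]
      exact hw.isPath i hi
  · rintro i (rfl | hi) j (rfl | hj) hij
    · exact absurd rfl hij
    · rw [Function.update_self, hold j hj]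
      exact (hmeet j hj).symm
    · rw [Function.update_self, hold i hi]
      exact hmeet i hi
    · rw [hold i hi, hold j hj]
      exact hw.meetOnlyAtStart hi hj hij

lemma center_notMem_range (hcross : PathsCrossOffTerminals G a) (hw : IsSpider w T)
    (hT : ∀ m ∈ [i, j, k, l], m ∈ T) (hnodup : [i, j, k, l].Nodup) : x ∉ Set.range a := by
  obtain ⟨t, hij, hkl, hta⟩ := hcross.exists_mem_support hnodup
    ((w i).reverse.append (w j)) ((w k).reverse.append (w l))
  suffices t = x from this ▸ hta
  simp only [Walk.mem_support_append_iff, Walk.support_reverse, List.mem_reverse] at hij hkl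
  have hmeet := hw.meetOnlyAtStart
  rcases hij with h | h <;> rcases hkl with h' | h' <;>
    exact hmeet (hT _ (by simp)) (hT _ (by simp)) (by grind) h h'

lemma center_mem_support (hcross : PathsCrossOffTerminals G a) (hw : IsSpider w T)
    (hT : 3 ≤ T.encard) (hl : l ∉ T) (hj : j ∈ T) (hy : y ∈ (w j).support)
    (p : G.Walk (a l) y) : x ∈ p.support := by
  by_contra hxp
  obtain ⟨z, ⟨m, hm, hzm⟩, r, -, hrp, hr⟩ := exists_isPath_forall_mem_imp_eq_end
    {t | ∃ m ∈ T, t ∈ (w m).support} p ⟨j, hj, hy⟩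
  have hzx : z ≠ x := fun h => hxp (h ▸ hrp r.end_mem_support)
  obtain ⟨s, hsm, hxs⟩ := exists_walk_start_notMem_support (hw.isPath m hm) hzm hzx
  obtain ⟨k, ⟨hk, hkm⟩, k', ⟨hk', hkm'⟩, hkk'⟩ : (T \ {m}).Nontrivial :=
    nontrivial_sdiff_of_encard_add_two_le (Set.finite_singleton m)
      (by norm_num [hT])
  have hnodup : [l, m, k, k'].Nodup := by grind
  obtain ⟨t, htrs, htkk', -⟩ :=
    hcross.exists_mem_support hnodup (r.append s) ((w k).reverse.append (w k'))
  simp only [Walk.mem_support_append_iff, Walk.support_reverse, List.mem_reverse] at htrs htkk'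
  obtain ⟨n, hn, hnm, htn⟩ : ∃ n ∈ T, n ≠ m ∧ t ∈ (w n).support :=
    htkk'.elim (fun h => ⟨k, hk, hkm, h⟩) (fun h => ⟨k', hk', hkm', h⟩)
  have hmeet := hw.meetOnlyAtStart hn hm hnm
  rcases htrs with htr | hts
  · obtain rfl := hr t htr ⟨n, hn, htn⟩
    exact hzx (hmeet htn hzm)
  · obtain rfl := hmeet htn (hsm hts)
    exact hxs hts

lemma exists_insert (hcross : PathsCrossOffTerminals G a) (hconn : G.Connected)
    (hw : IsSpider w T) (hT : 3 ≤ T.encard) (l : ι) :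
    ∃ w' : ∀ i, G.Walk x (a i), IsSpider w' (insert l T) := by
  classical
  by_cases hl : l ∈ T
  · exact ⟨w, by rwa [Set.insert_eq_of_mem hl]⟩
  obtain ⟨p⟩ := hconn.preconnected (a l) x
  obtain ⟨q, hq, hqT⟩ : ∃ q : G.Walk x (a l), q.IsPath ∧ ∀ i ∈ T, MeetOnlyAtStart (w i) q := by
    obtain ⟨i₀, hi₀⟩ : T.Nonempty :=
      Set.one_le_encard_iff_nonempty.mp (le_trans (by norm_num) hT)
    obtain ⟨z, ⟨m, hm, hz⟩, r, hr, -, hrT⟩ := exists_isPath_forall_mem_imp_eq_end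
      {t | ∃ i ∈ T, t ∈ (w i).support} p ⟨i₀, hi₀, (w i₀).start_mem_support⟩
    have hxr := hw.center_mem_support hcross hT hl hm hz r
    obtain rfl := hrT x hxr ⟨m, hm, (w m).start_mem_support⟩
    exact ⟨r.reverse, hr.reverse, fun i hi t hti htr => hrT t (by simpa using htr) ⟨i, hi, hti⟩⟩
  exact ⟨_, hw.update_insert hl hq hqT⟩

end IsSpider

lemma exists_isSpider_triple (hconn : G.Connected) (a : ι → V) (hij : i ≠ j) (hik : i ≠ k)
    (hjk : j ≠ k) : ∃ (x : V) (w : ∀ l, G.Walk x (a l)), IsSpider w {i, j, k} := by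
  classical
  obtain ⟨x, p, q, r, hp, hq, hr, hpq, hpr, hqr⟩ := exists_tripod hconn (a i) (a j) (a k)
  have hempty : IsSpider (fun l => (hconn.preconnected x (a l)).some) ∅ :=
    ⟨by simp, Set.pairwise_empty _⟩
  have hr_spider := hempty.update_insert (Set.notMem_empty k) hr (by simp)
  have hqr_spider := hr_spider.update_insert (l := j) (by simpa) hq (by simpa using hqr.symm)
  have hpqr_spider := hqr_spider.update_insert (l := i) (by grind) hp
    (by simpa [Function.update_of_ne hjk.symm] using ⟨hpq.symm, hpr.symm⟩)
  exact ⟨x, _, by simpa using hpqr_spider⟩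

lemma exists_center_forall_finite_exists_isSpider (hcross : PathsCrossOffTerminals G a)
    (hconn : G.Connected) (hι : 3 ≤ ENat.card ι) :
    ∃ x, ∀ T : Set ι, T.Finite → ∃ w : ∀ i, G.Walk x (a i), IsSpider w T := by
  rw [← Set.encard_univ] at hι
  obtain ⟨T₀, -, hT₀⟩ := Set.exists_subset_encard_eq hι
  obtain ⟨i, j, k, hij, hik, hjk, rfl⟩ := Set.encard_eq_three.mp hT₀
  obtain ⟨x, w₀, hw₀⟩ := exists_isSpider_triple hconn a hij hik hjk
  refine ⟨x, fun T hT => ?_⟩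
  suffices ∃ w : ∀ i, G.Walk x (a i), IsSpider w (T ∪ {i, j, k}) from
    this.imp fun w hw => hw.mono Set.subset_union_left
  induction T, hT using Set.Finite.induction_on with
  | empty => exact ⟨w₀, by rwa [Set.empty_union]⟩
  | @insert l T _ _ ih =>
    obtain ⟨w, hw⟩ := ih
    rw [Set.insert_union]
    exact hw.exists_insert hcross hconn (hT₀ ▸ Set.encard_le_encard Set.subset_union_right) l

end Spiders

theorem statement0_general {ι : Type*} (hι : 4 ≤ ENat.card ι) (G : SimpleGraph V)
    (hconn : G.Connected) (a : ι → V) (hcross : PathsCrossOffTerminals G a) :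
    ∃ v : V, (∀ i, a i ≠ v) ∧ ¬ (G.induce {u | u ≠ v}).Connected ∧
      ∀ (i j : ι) (hi : a i ∈ {u | u ≠ v}) (hj : a j ∈ {u | u ≠ v}), i ≠ j →
        ¬ (G.induce {u | u ≠ v}).Reachable ⟨a i, hi⟩ ⟨a j, hj⟩ := by
  obtain ⟨x, hx⟩ := exists_center_forall_finite_exists_isSpider hcross hconn
    (le_trans (by norm_num) hι)
  have hsep : ∀ (i j : ι) (hi : a i ∈ {u | u ≠ x}) (hj : a j ∈ {u | u ≠ x}), i ≠ j →
      ¬ (G.induce {u | u ≠ x}).Reachable ⟨a i, hi⟩ ⟨a j, hj⟩ := by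
    intro i j hi hj hij
    obtain ⟨k, l, hnodup⟩ := exists_nodup_of_four_le_card hι hij
    obtain ⟨w, hw⟩ := hx {j, k, l} (Set.toFinite _)
    have hcard : ({j, k, l} : Set ι).encard = 3 :=
      Set.encard_eq_three.mpr ⟨j, k, l, by grind⟩
    exact not_reachable_induce_ne_of_forall_mem_support (hw.center_mem_support hcross hcard.ge
      (by grind) (Set.mem_insert j _) (w j).end_mem_support) hi hj
  have : Nontrivial ι := (ENat.one_lt_card_iff_nontrivial ι).mp (lt_of_lt_of_le (by norm_num) hι)
  obtain ⟨i, j, hij⟩ := exists_pair_ne ι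
  obtain ⟨k, l, hnodup⟩ := exists_nodup_of_four_le_card hι hij
  obtain ⟨w, hw⟩ := hx {m | m ∈ [i, j, k, l]} (List.finite_toSet _)
  have hxa : ∀ m, a m ≠ x := fun m hm =>
    hw.center_notMem_range hcross (fun _ => id) hnodup ⟨m, hm⟩
  exact ⟨x, hxa, fun h => hsep i j (hxa i) (hxa j) hij (h.preconnected _ _), hsep⟩

/-- If any `aᵢaⱼ`-path and any `aₖaₗ`-path (for `{i,j,k,ℓ} = {1,2,3,4}`)
share a vertex outside `A = {a₁,a₂,a₃,a₄}` in a connected graph `G`, then some vertex `v`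
cuts `G` so that the four vertices lie in four distinct components of `G − v`. -/
theorem statement0 [Fintype V] (G : SimpleGraph V) (hconn : G.Connected)
    (a : Fin 4 → V) (hinj : Function.Injective a)
    (hcross : ∀ i j k l : Fin 4, ({i, j, k, l} : Finset (Fin 4)) = Finset.univ →
      ∀ p : G.Walk (a i) (a j), p.IsPath → ∀ q : G.Walk (a k) (a l), q.IsPath →
        ∃ x, x ∈ p.support ∧ x ∈ q.support ∧ x ∉ Set.range a) :
    ∃ v : V, (∀ i, a i ≠ v) ∧ ¬ (G.induce {u | u ≠ v}).Connected ∧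
      ∀ (i j : Fin 4) (hi : a i ∈ {u | u ≠ v}) (hj : a j ∈ {u | u ≠ v}), i ≠ j →
        ¬ (G.induce {u | u ≠ v}).Reachable ⟨a i, hi⟩ ⟨a j, hj⟩ := by
  exact statement0_general (by simp) G hconn a
    fun i j k l hnodup => hcross i j k l (by decide +revert)
end

section
/- Let G be a 2-connected finite simple graph and let λ : E(G) → ℤ/2 be an edge labeling. If every cycle Z of G satisfies λ(Z) = 1 (i.e., every cycle of G is nontrivial), then G is itself a cycle: G is connected and every vertex of G has degree exactly 2. -/
open SimpleGraph

variable {V : Type*}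

/-!
If a vertex `v` has three neighbours, a tripod joining them in the connected graph `G - v` closes
up to a theta graph: three walks from `v` to some `x`, any two of which form a cycle. If these
walks have label sums `p`, `q`, `r`, then `p + q = p + r = q + r`, so `q = r` and the common value
`q + r = 2q` is even; in `ℤ/2` it cannot be `1`. In the other direction, a vertex with at most one
neighbour would be isolated by deleting that neighbour.
-/

section LabelSum

variable {A : Type*} {G : SimpleGraph V}

/-- The sum of the labels along a walk, with multiplicity, for labels in any additive monoid;
`walkLambda` is the case of labels in `ℤ/2`. -/
def walkSum [AddMonoid A] (label : Sym2 V → A) {x y : V} (w : G.Walk x y) : A :=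
  (w.edges.map label).sum

lemma walkSum_append [AddMonoid A] (label : Sym2 V → A) {x y z : V} (p : G.Walk x y)
    (q : G.Walk y z) : walkSum label (p.append q) = walkSum label p + walkSum label q := by
  simp [walkSum]

lemma walkSum_reverse [AddCommMonoid A] (label : Sym2 V → A) {x y : V} (p : G.Walk x y) :
    walkSum label p.reverse = walkSum label p := by
  simp [walkSum, List.sum_reverse]

lemma even_of_pairwise_add_eq [Add A] [IsLeftCancelAdd A] {p q r g : A} (hpq : p + q = g)
    (hpr : p + r = g) (hqr : q + r = g) : Even g := by
  obtain rfl : q = r := add_left_cancel (hpq.trans hpr.symm)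
  exact ⟨q, hqr.symm⟩

lemma even_of_theta [AddCancelCommMonoid A] {label : Sym2 V → A} {g : A}
    (hcyc : ∀ (z : V) (Z : G.Walk z z), Z.IsCycle → walkSum label Z = g)
    {v x : V} {p q r : G.Walk v x} (hpq : (p.append q.reverse).IsCycle)
    (hpr : (p.append r.reverse).IsCycle) (hqr : (q.append r.reverse).IsCycle) : Even g := by
  have sum_add_sum {s t : G.Walk v x} (h : (s.append t.reverse).IsCycle) :
      walkSum label s + walkSum label t = g := by
    rw [← hcyc v _ h, walkSum_append, walkSum_reverse]
  exact even_of_pairwise_add_eq (sum_add_sum hpq) (sum_add_sum hpr) (sum_add_sum hqr)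

end LabelSum

section Theta

variable {G : SimpleGraph V}

lemma isPath_append_of_forall_mem_support_eq {a b c : V} {p : G.Walk a b} {q : G.Walk b c}
    (hp : p.IsPath) (hq : q.IsPath) (h : ∀ y ∈ p.support, y ∈ q.support → y = b) :
    (p.append q).IsPath := by
  have hb_tail : b ∉ q.support.tail := by
    have hq_nodup := hq.support_nodup
    rw [← q.cons_tail_support] at hq_nodup
    exact (List.nodup_cons.1 hq_nodup).1
  rw [Walk.isPath_def, Walk.support_append, List.nodup_append']
  refine ⟨hp.support_nodup, hq.support_nodup.tail, fun y hy_p hy_q ↦ hb_tail ?_⟩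
  exact h y hy_p (List.mem_of_mem_tail hy_q) ▸ hy_q

lemma exists_isPath_forall_mem_eq (hG : G.Preconnected) (c : V) {S : Finset V}
    (hS : S.Nonempty) :
    ∃ x ∈ S, ∃ r : G.Walk c x, r.IsPath ∧ ∀ y ∈ r.support, y ∈ S → y = x := by
  classical
  obtain ⟨a, ha⟩ := hS
  obtain ⟨w, hw⟩ := hG.exists_isPath c a
  obtain ⟨x, hxS, hxw, hfirst⟩ := w.exists_mem_support_forall_mem_support_imp_eq S
    ⟨a, Finset.mem_filter.2 ⟨ha, w.end_mem_support⟩⟩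
  exact ⟨x, hxS, w.takeUntil x hxw, hw.takeUntil hxw, fun y hy hyS ↦ hfirst y hyS hy⟩

lemma exists_tripod_s2 (hG : G.Preconnected) (a b c : V) :
    ∃ (x : V) (p : G.Walk a x) (q : G.Walk b x) (r : G.Walk c x),
      (p.append q.reverse).IsPath ∧ (p.append r.reverse).IsPath ∧
        (q.append r.reverse).IsPath := by
  classical
  obtain ⟨w, hw⟩ := hG.exists_isPath a b
  obtain ⟨x, hx, r, hr, hr_meets⟩ := exists_isPath_forall_mem_eq hG c
    (S := w.support.toFinset) ⟨a, List.mem_toFinset.2 w.start_mem_support⟩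
  rw [List.mem_toFinset] at hx
  have append_reverse_isPath {d : V} {s : G.Walk d x} (hs : s.IsPath)
      (hsub : s.support ⊆ w.support) : (s.append r.reverse).IsPath :=
    isPath_append_of_forall_mem_support_eq hs hr.reverse fun y hys hyr ↦
      hr_meets y (by simpa using hyr) (List.mem_toFinset.2 (hsub hys))
  refine ⟨x, w.takeUntil x hx, (w.dropUntil x hx).reverse, r, ?_,
    append_reverse_isPath (hw.takeUntil hx) (w.support_takeUntil_subset_support hx),
    append_reverse_isPath (hw.dropUntil hx).reverse ?_⟩
  · rwa [Walk.reverse_reverse, w.take_spec hx]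
  · simpa only [Walk.support_reverse, List.reverse_subset] using
      w.support_dropUntil_subset_support hx

lemma isCycle_cons_concat {v a b : V} {p : G.Walk a b} (hp : p.IsPath) (hv : v ∉ p.support)
    (hab : a ≠ b) (ha : G.Adj v a) (hb : G.Adj b v) :
    (Walk.cons ha (p.concat hb)).IsCycle := by
  refine (Walk.cons_isCycle_iff _ ha).2 ⟨hp.concat hv hb, fun hmem ↦ ?_⟩
  rw [Walk.edges_concat, List.concat_eq_append, List.mem_append, List.mem_singleton] at hmem
  rcases hmem with hmem | heq
  · exact hv (p.fst_mem_support_of_mem_edges hmem)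
  · rw [Sym2.eq_swap, Sym2.congr_left] at heq
    exact hab heq

lemma isCycle_cons_append_reverse_cons {v a b x : V} {p : G.Walk a x} {q : G.Walk b x}
    (hpq : (p.append q.reverse).IsPath) (hv : v ∉ (p.append q.reverse).support) (hab : a ≠ b)
    (ha : G.Adj v a) (hb : G.Adj v b) :
    ((Walk.cons ha p).append (Walk.cons hb q).reverse).IsCycle := by
  rw [Walk.reverse_cons, Walk.cons_append, Walk.append_assoc, ← Walk.concat_eq_append]
  exact isCycle_cons_concat hpq hv hab ha hb.symm

lemma notMem_support_map_induce_ne {v : V} {a b : {u | u ≠ v}}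
    (p : (G.induce {u | u ≠ v}).Walk a b) :
    v ∉ (p.map (Embedding.induce {u | u ≠ v}).toHom).support := by
  rw [Walk.support_map, List.mem_map]
  rintro ⟨x, -, hx⟩
  exact x.2 hx

lemma exists_theta {v a b c : V} (hdel : (G.induce {u | u ≠ v}).Preconnected)
    (ha : G.Adj v a) (hb : G.Adj v b) (hc : G.Adj v c)
    (hab : a ≠ b) (hac : a ≠ c) (hbc : b ≠ c) :
    ∃ (x : V) (p q r : G.Walk v x), (p.append q.reverse).IsCycle ∧
      (p.append r.reverse).IsCycle ∧ (q.append r.reverse).IsCycle := by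
  let incl := (Embedding.induce (G := G) {u | u ≠ v}).toHom
  have closes_up {d e x : {u | u ≠ v}} {s : (G.induce {u | u ≠ v}).Walk d x}
      {t : (G.induce {u | u ≠ v}).Walk e x} (hst : (s.append t.reverse).IsPath)
      (hde : incl d ≠ incl e) (hd : G.Adj v (incl d)) (he : G.Adj v (incl e)) :
      ((Walk.cons hd (s.map incl)).append (Walk.cons he (t.map incl)).reverse).IsCycle := by
    refine isCycle_cons_append_reverse_cons ?_ ?_ hde hd he
    · rw [Walk.reverse_map, ← Walk.map_append]
      exact hst.map Subtype.val_injective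
    · rw [Walk.reverse_map, ← Walk.map_append]
      exact notMem_support_map_induce_ne _
  obtain ⟨x, p, q, r, hpq, hpr, hqr⟩ :=
    exists_tripod_s2 hdel ⟨a, ha.ne'⟩ ⟨b, hb.ne'⟩ ⟨c, hc.ne'⟩
  exact ⟨x, .cons ha (p.map incl), .cons hb (q.map incl), .cons hc (r.map incl),
    closes_up hpq hab ha hb, closes_up hpr hac ha hc, closes_up hqr hbc hb hc⟩

end Theta

section VertexDeletion

variable {G : SimpleGraph V}

lemma connected_of_forall_induce_ne_preconnected (hV : 3 ≤ ENat.card V)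
    (hdel : ∀ v : V, (G.induce {u | u ≠ v}).Preconnected) : G.Connected := by
  have : Nonempty V := (ENat.one_le_card_iff_nonempty V).1 (le_trans (by norm_num) hV)
  refine ⟨fun a b ↦ ?_⟩
  obtain ⟨z, hza, hzb⟩ := ENat.exists_ne_ne_of_three_le hV a b
  exact (hdel z ⟨a, hza.symm⟩ ⟨b, hzb.symm⟩).map (Embedding.induce {u | u ≠ z}).toHom

lemma exists_adj_ne_of_induce_ne_preconnected (hV : 3 ≤ ENat.card V) {v a : V} (hva : v ≠ a)
    (hdel : (G.induce {u | u ≠ a}).Preconnected) : ∃ b ≠ a, G.Adj v b := by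
  obtain ⟨z, hzv, hza⟩ := ENat.exists_ne_ne_of_three_le hV v a
  have : Nontrivial {u | u ≠ a} := ⟨⟨v, hva⟩, ⟨z, hza⟩, fun h ↦ hzv (congrArg Subtype.val h).symm⟩
  obtain ⟨⟨b, hba⟩, hvb⟩ := hdel.exists_adj_of_nontrivial ⟨v, hva⟩
  exact ⟨b, hba, hvb⟩

lemma exists_adj_adj_ne_of_forall_induce_ne_preconnected (hV : 3 ≤ ENat.card V)
    (hdel : ∀ v : V, (G.induce {u | u ≠ v}).Preconnected) (v : V) :
    ∃ a b, a ≠ b ∧ G.Adj v a ∧ G.Adj v b := by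
  obtain ⟨z, hzv, -⟩ := ENat.exists_ne_ne_of_three_le hV v v
  obtain ⟨a, -, ha⟩ := exists_adj_ne_of_induce_ne_preconnected hV hzv.symm (hdel z)
  obtain ⟨b, hba, hb⟩ := exists_adj_ne_of_induce_ne_preconnected hV ha.ne (hdel a)
  exact ⟨a, b, hba.symm, ha, hb⟩

end VertexDeletion

lemma encard_neighborSet (G : SimpleGraph V) (v : V) [Fintype (G.neighborSet v)] :
    (G.neighborSet v).encard = G.degree v := by
  rw [← coe_neighborFinset, Set.encard_coe_eq_coe_finsetCard, card_neighborFinset_eq_degree]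

lemma not_even_one_zmod_two : ¬ Even (1 : ZMod 2) := by
  simp [Even, CharTwo.add_self_eq_zero]

theorem statement2_general {A : Type*} [AddCancelCommMonoid A] {G : SimpleGraph V}
    {label : Sym2 V → A} {g : A} (hg : ¬ Even g) (hV : 3 ≤ ENat.card V)
    (hdel : ∀ v : V, (G.induce {u | u ≠ v}).Preconnected)
    (hcyc : ∀ (z : V) (Z : G.Walk z z), Z.IsCycle → walkSum label Z = g) :
    G.Connected ∧ ∀ v : V, (G.neighborSet v).encard = 2 := by
  refine ⟨connected_of_forall_induce_ne_preconnected hV hdel, fun v ↦ ?_⟩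
  obtain ⟨a, b, hab, ha, hb⟩ := exists_adj_adj_ne_of_forall_induce_ne_preconnected hV hdel v
  have no_third_neighbor {c : V} (hc : G.Adj v c) : c = a ∨ c = b := by
    by_contra! ⟨hca, hcb⟩
    obtain ⟨x, p, q, r, hpq, hpr, hqr⟩ :=
      exists_theta (hdel v) ha hb hc hab hca.symm hcb.symm
    exact hg (even_of_theta hcyc hpq hpr hqr)
  refine Set.encard_eq_two.2 ⟨a, b, hab, Set.Subset.antisymm (fun c ↦ no_third_neighbor) ?_⟩
  exact Set.pair_subset ha hb

/-- If `G` is 2-connected and every cycle of `G` has `λ`-value `1`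
(every cycle is nontrivial), then `G` is itself a cycle: it is connected and every
vertex has degree exactly `2`. -/
theorem statement2 [Fintype V] (G : SimpleGraph V) [DecidableRel G.Adj]
    (lam : Sym2 V → ZMod 2) (h2 : TwoConnected G)
    (hcyc : ∀ (z : V) (Z : G.Walk z z), Z.IsCycle → walkLambda lam Z = 1) :
    G.Connected ∧ ∀ v : V, G.degree v = 2 := by
  have hgen := statement2_general not_even_one_zmod_two (by simpa using h2.1)
    (fun v ↦ (h2.2.2 v).preconnected) hcyc
  exact ⟨hgen.1, fun v ↦ by exact_mod_cast encard_neighborSet G v ▸ hgen.2 v⟩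
end

section
/- Let G be a finite simple graph, Z a cycle in G, λ : E(G) → ℤ/2 an edge labeling, and B a bridge of G with respect to Z containing at least one vertex v ∉ V(Z). Let x, y ∈ V(B) and let ω be a proper walk in B from x to y. Then there exists a proper walk ω′ in B from x to y that passes through the vertex v and satisfies λ(ω′) = λ(ω). -/
open SimpleGraph

variable {V : Type*}

/-!
If `p` is a proper walk in `B` from `x` to `v`, then `p` followed by its reverse followed by `ω` is
a walk from `x` to `y` through `v`. Every edge of `p` is traversed twice, so modulo 2 the `λ`-value
is that of `ω`. It is proper because the only vertex of `p` that can lie on the cycle is its start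
`x`, which is also the start of `ω`. Such a `p` exists because the vertices of `B` off the cycle
form one component of `G − V(Z)`, and every vertex of `B` on the cycle has a neighbour in it.
-/

section

variable {G : SimpleGraph V} {B : G.Subgraph} {Zv : Set V} {Ze : Set (Sym2 V)} {a b c v x y : V}

namespace ReachAvoiding

theorem notMem_right (h : ReachAvoiding G Zv a b) : b ∉ Zv := by
  obtain ⟨p, hp⟩ := h
  exact hp b p.end_mem_support

theorem symm (h : ReachAvoiding G Zv a b) : ReachAvoiding G Zv b a := by
  obtain ⟨p, hp⟩ := h
  exact ⟨p.reverse, fun u hu => hp u (by simpa using hu)⟩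

theorem trans (hab : ReachAvoiding G Zv a b) (hbc : ReachAvoiding G Zv b c) :
    ReachAvoiding G Zv a c := by
  obtain ⟨p, hp⟩ := hab
  obtain ⟨q, hq⟩ := hbc
  exact ⟨p.append q, fun u hu => ((p.mem_support_append_iff q).mp hu).elim (hp u) (hq u)⟩

theorem congr_left (h : ReachAvoiding G Zv a b) :
    ReachAvoiding G Zv a c ↔ ReachAvoiding G Zv b c :=
  ⟨h.symm.trans, h.trans⟩

theorem of_mem_support {p : G.Walk a b} (hp : ∀ u ∈ p.support, u ∉ Zv) (hc : c ∈ p.support) :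
    ReachAvoiding G Zv c b := by
  classical
  exact ⟨p.dropUntil c hc, fun u hu => hp u (p.support_dropUntil_subset_support hc hu)⟩

end ReachAvoiding

/-- The round trip along `p` to `v` and back, followed by `w`. It makes `w` pass through `v` while
changing the number of traversals of each edge by an even number. -/
def detour (p : G.Walk x v) (w : G.Walk x y) : G.Walk x y :=
  p.append (p.reverse.append w)

theorem mem_support_detour_iff {p : G.Walk x v} {w : G.Walk x y} {u : V} :
    u ∈ (detour p w).support ↔ u ∈ p.support ∨ u ∈ w.support := by
  simp [detour, Walk.mem_support_append_iff]

theorem mem_edges_detour_iff {p : G.Walk x v} {w : G.Walk x y} {e : Sym2 V} :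
    e ∈ (detour p w).edges ↔ e ∈ p.edges ∨ e ∈ w.edges := by
  simp [detour]

theorem walkLambda_detour (lam : Sym2 V → ZMod 2) (p : G.Walk x v) (w : G.Walk x y) :
    walkLambda lam (detour p w) = walkLambda lam w := by
  simp [walkLambda, detour, List.sum_reverse, CharTwo.add_cancel_left]

namespace IsProperWalkIn

theorem detour {p : G.Walk x v} {w : G.Walk x y} (hp : IsProperWalkIn B Zv Ze p) (hv : v ∉ Zv)
    (hw : IsProperWalkIn B Zv Ze w) : IsProperWalkIn B Zv Ze (detour p w) := by
  obtain ⟨hpB, hpE, hpZ, hpZe⟩ := hp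
  obtain ⟨hwB, hwE, hwZ, hwZe⟩ := hw
  have hpx : ∀ u ∈ p.support, u ∈ Zv → u = x := fun u hu huZ =>
    (hpZ u hu huZ).resolve_right (ne_of_mem_of_not_mem huZ hv)
  exact
    ⟨fun u hu => (mem_support_detour_iff.mp hu).elim (hpB u) (hwB u),
      fun e he => (mem_edges_detour_iff.mp he).elim (hpE e) (hwE e),
      fun u hu huZ => (mem_support_detour_iff.mp hu).elim
        (fun hup => .inl (hpx u hup huZ)) (fun huw => hwZ u huw huZ),
      fun e he => (mem_edges_detour_iff.mp he).elim (hpZe e) (hwZe e)⟩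

theorem cons {p : G.Walk c y} (hp : IsProperWalkIn B Zv Ze p) (hxc : B.Adj x c) (hc : c ∉ Zv)
    (hxcZ : s(x, c) ∉ Ze) : IsProperWalkIn B Zv Ze (Walk.cons hxc.adj_sub p) := by
  obtain ⟨hpB, hpE, hpZ, hpZe⟩ := hp
  have hpy : ∀ u ∈ p.support, u ∈ Zv → u = y := fun u hu huZ =>
    (hpZ u hu huZ).resolve_left (ne_of_mem_of_not_mem huZ hc)
  simp only [IsProperWalkIn, Walk.support_cons, Walk.edges_cons, List.forall_mem_cons]
  exact ⟨⟨hxc.fst_mem, hpB⟩, ⟨hxc, hpE⟩,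
    ⟨fun _ => .inl trivial, fun u hu huZ => .inr (hpy u hu huZ)⟩, ⟨hxcZ, hpZe⟩⟩

end IsProperWalkIn

namespace IsBridgeOf

theorem verts_eq_and_adj_iff (hB : IsBridgeOf G Zv Ze B) (hvB : v ∈ B.verts) (hv : v ∉ Zv) :
    B.verts = {u | ReachAvoiding G Zv v u} ∪
        {z | z ∈ Zv ∧ ∃ c, ReachAvoiding G Zv v c ∧ G.Adj c z} ∧
      ∀ x y, B.Adj x y ↔ G.Adj x y ∧ (ReachAvoiding G Zv v x ∨ ReachAvoiding G Zv v y) := by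
  rcases hB with ⟨s, t, -, -, hs, ht, hverts, -⟩ | ⟨a, -, hverts, hadj⟩
  · rw [hverts] at hvB
    rcases hvB with rfl | rfl
    exacts [absurd hs hv, absurd ht hv]
  · rw [hverts] at hvB
    have hav : ReachAvoiding G Zv a v := hvB.resolve_right fun hvZ => hv hvZ.1
    simpa only [hav.congr_left] using And.intro hverts hadj

theorem isProperWalkIn_of_avoiding (hB : IsBridgeOf G Zv Ze B)
    (hZe : ∀ e ∈ Ze, ∀ z ∈ e, z ∈ Zv) (hvB : v ∈ B.verts) {p : G.Walk x v}
    (hp : ∀ u ∈ p.support, u ∉ Zv) : IsProperWalkIn B Zv Ze p := by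
  obtain ⟨hverts, hadj⟩ := hB.verts_eq_and_adj_iff hvB (hp v p.end_mem_support)
  have hreach : ∀ u ∈ p.support, ReachAvoiding G Zv v u := fun u hu =>
    (ReachAvoiding.of_mem_support hp hu).symm
  refine ⟨fun u hu => hverts ▸ .inl (hreach u hu), fun e he => ?_,
    fun u hu huZ => absurd huZ (hp u hu), fun e he heZ => ?_⟩ <;>
    induction e with | _ s t
  · exact (hadj s t).mpr
      ⟨p.adj_of_mem_edges he, .inl (hreach s (p.fst_mem_support_of_mem_edges he))⟩
  · exact hp s (p.fst_mem_support_of_mem_edges he) (hZe _ heZ s (Sym2.mem_mk_left s t))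

theorem exists_isProperWalkIn (hB : IsBridgeOf G Zv Ze B) (hZe : ∀ e ∈ Ze, ∀ z ∈ e, z ∈ Zv)
    (hvB : v ∈ B.verts) (hv : v ∉ Zv) (hx : x ∈ B.verts) :
    ∃ p : G.Walk x v, IsProperWalkIn B Zv Ze p := by
  obtain ⟨hverts, hadj⟩ := hB.verts_eq_and_adj_iff hvB hv
  rw [hverts] at hx
  rcases hx with hvx | ⟨-, c, hvc, hcx⟩
  · obtain ⟨p, hp⟩ := hvx.symm
    exact ⟨p, hB.isProperWalkIn_of_avoiding hZe hvB hp⟩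
  · obtain ⟨p, hp⟩ := hvc.symm
    have hxc : B.Adj x c := (hadj x c).mpr ⟨hcx.symm, .inr hvc⟩
    have hxcZ : s(x, c) ∉ Ze := fun h => hvc.notMem_right (hZe _ h c (Sym2.mem_mk_right x c))
    exact ⟨.cons hxc.adj_sub p,
      (hB.isProperWalkIn_of_avoiding hZe hvB hp).cons hxc hvc.notMem_right hxcZ⟩

end IsBridgeOf

end

theorem statement3_general {G : SimpleGraph V} {Zv : Set V} {Ze : Set (Sym2 V)}
    (hZe : ∀ e ∈ Ze, ∀ z ∈ e, z ∈ Zv) {B : G.Subgraph} (hB : IsBridgeOf G Zv Ze B)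
    {v : V} (hvB : v ∈ B.verts) (hv : v ∉ Zv)
    {x y : V} {w : G.Walk x y} (hw : IsProperWalkIn B Zv Ze w) :
    ∃ w' : G.Walk x y, IsProperWalkIn B Zv Ze w' ∧ v ∈ w'.support ∧
      ∀ lam : Sym2 V → ZMod 2, walkLambda lam w' = walkLambda lam w := by
  obtain ⟨p, hp⟩ := hB.exists_isProperWalkIn hZe hvB hv (hw.1 x w.start_mem_support)
  exact ⟨detour p w, hp.detour hv hw, mem_support_detour_iff.mpr (.inl p.end_mem_support),
    fun lam => walkLambda_detour lam p w⟩

/-- In a bridge `B` (w.r.t. a cycle `Z`) containing a vertex `v ∉ V(Z)`,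
every proper walk `ω` in `B` from `x` to `y` can be replaced by a proper walk `ω′` in `B`
from `x` to `y` that passes through `v` and has the same `λ`-value. -/
theorem statement3 [Fintype V] (G : SimpleGraph V) (lam : Sym2 V → ZMod 2)
    (z₀ : V) (Z : G.Walk z₀ z₀) (hZ : Z.IsCycle) (B : G.Subgraph)
    (hB : IsBridgeOf G {u | u ∈ Z.support} {e | e ∈ Z.edges} B)
    (v : V) (hvB : v ∈ B.verts) (hvZ : v ∉ Z.support)
    (x y : V) (hx : x ∈ B.verts) (hy : y ∈ B.verts)
    (w : G.Walk x y) (hw : IsProperWalkIn B {u | u ∈ Z.support} {e | e ∈ Z.edges} w) :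
    ∃ w' : G.Walk x y, IsProperWalkIn B {u | u ∈ Z.support} {e | e ∈ Z.edges} w' ∧
      v ∈ w'.support ∧ walkLambda lam w' = walkLambda lam w := by
  obtain ⟨w', hw', hv, hlam⟩ := statement3_general
    (fun _ he _ hz => Walk.mem_support_of_mem_edges he hz) hB hvB hvZ hw
  exact ⟨w', hw', hv, hlam lam⟩
end
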